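/- Let X be a quantum-Wajsberg algebra. Then for all x, y, z ∈ X: (1) (x∧y)∧(y∧z) = (x∧y)∧z; (2) the relation ≤_Q is transitive; (3) x∨y ≤_Q x*→y; (4) (x*→y)*→(x→y*)* = x*→y; (5) (x→y)*→(y→x)* = x→y; (6) (y→x)→(x→y) = x→y; (7) (x→y)∨(y→x) = 1; (8) (z∧x)→(y∧x) = (z∧x)→y. -/

import Mathlib

/-- A bounded involutive BE algebra. -/
class InvBE (X : Type*) where
  imp : X → X → X
  one : X
  zero : X
  be1 : ∀ x : X, imp x x = one
  be2 : ∀ x : X, imp x one = one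
  be3 : ∀ x : X, imp one x = x
  be4 : ∀ x y z : X, imp x (imp y z) = imp y (imp x z)
  bound : ∀ x : X, imp zero x = one
  dn : ∀ x : X, imp (imp x zero) zero = x

namespace InvBE

variable {X : Type*} [InvBE X]

/-- Negation: `x* = x → 0`. -/
def neg (x : X) : X := imp x zero

/-- `x ∨ y = (x → y) → y`. -/
def sup (x y : X) : X := imp (imp x y) y

/-- `x ∧ y = ((x* → y*) → y*)*`. -/
def inf (x y : X) : X := neg (imp (imp (neg x) (neg y)) (neg y))

/-- `x ≤ y` iff `x → y = 1`. -/
def le (x y : X) : Prop := imp x y = one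

/-- `x ≤_Q y` iff `x = x ∧ y`. -/
def leQ (x y : X) : Prop := x = inf x y

end InvBE

/-!
With the product `x ⊙ y = (x → y*)*`, implication becomes a residual, `(x ⊙ y) → z = x → (y → z)`,
and the meet becomes `x ∧ y = y ⊙ (y → x)`. The engine is the law `y ≤_Q x → y`. Since `y* ≤_Q u`
is the same as the cancellation `u → (y ⊙ u) = y`, the law, read as `y* ≤_Q y → x`, cancels
`u = y → x`. Hence `a ≤_Q b` gives `b = (b → a) → a`, and so `z → b = (b → a) → (z → a)` is
`≤_Q`-above `z → a`: implication is `≤_Q`-monotone in its consequent and antitone in its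
antecedent. This yields (1)–(3) and (8). The remaining identities all reduce to (6), where
cancellation is combined with `x → (x ∧ y) = x → y`:
`(y → x) → (x → y) = x → ((y → x) → (y ⊙ (y → x))) = x → y`.
-/

namespace InvBE

section Involutive

variable {X : Type*} [InvBE X]

/-- The product `x ⊙ y = (x → y*)*`, of which `imp` is the residual. -/
def prod (x y : X) : X := neg (imp x (neg y))

lemma neg_neg (x : X) : neg (neg x) = x := dn x

lemma neg_one : neg (one : X) = zero := be3 zero

lemma imp_neg_comm (x y : X) : imp x (neg y) = imp y (neg x) := be4 x y zero

lemma neg_imp_neg (x y : X) : imp (neg x) (neg y) = imp y x := by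
  rw [imp_neg_comm, neg_neg]

lemma neg_imp_comm (x y : X) : imp (neg x) y = imp (neg y) x := by
  rw [← neg_imp_neg, neg_neg]

lemma prod_comm (x y : X) : prod x y = prod y x :=
  congrArg neg (imp_neg_comm x y)

lemma prod_one (x : X) : prod x one = x := by
  rw [prod, neg_one]
  exact dn x

lemma prod_imp (x y z : X) : imp (prod x y) z = imp x (imp y z) := by
  rw [prod, neg_imp_comm, be4, neg_imp_neg]

lemma prod_assoc (x y z : X) : prod (prod x y) z = prod x (prod y z) := by
  rw [prod, prod_imp, prod, prod, neg_neg]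

lemma inf_eq_prod_imp (x y : X) : inf x y = prod y (imp y x) := by
  rw [inf, neg_imp_neg, prod_comm, prod]

lemma inf_one (x : X) : inf x one = x := by
  rw [inf_eq_prod_imp, be3, prod_comm, prod_one]

lemma one_inf (x : X) : inf one x = x := by
  rw [inf_eq_prod_imp, be2, prod_one]

lemma inf_zero (x : X) : inf x zero = zero := by
  rw [inf_eq_prod_imp, bound, prod_one]

lemma zero_inf (x : X) : inf zero x = zero := by
  calc inf zero x = neg (imp x (neg (neg x))) := inf_eq_prod_imp zero x
    _ = zero := by rw [neg_neg, be1, neg_one]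

lemma inf_imp (x y z : X) : imp (inf x y) z = imp (imp y x) (imp y z) := by
  rw [inf_eq_prod_imp, prod_comm, prod_imp]

lemma inf_inf_eq_prod_inf_imp (x y z : X) :
    inf x (inf y z) = prod z (inf (imp z x) (imp z y)) := by
  calc inf x (inf y z) = prod (inf y z) (imp (inf y z) x) := inf_eq_prod_imp x _
    _ = prod (prod z (imp z y)) (imp (imp z y) (imp z x)) := by rw [inf_imp, inf_eq_prod_imp y]
    _ = prod z (inf (imp z x) (imp z y)) := by rw [prod_assoc, inf_eq_prod_imp (imp z x)]

lemma neg_leQ_neg_iff {x y : X} : leQ (neg x) (neg y) ↔ sup x y = x := by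
  have neg_inf_neg : neg (inf (neg x) (neg y)) = sup x y := by
    simp only [inf, sup, neg_neg]
  constructor
  · intro h
    rw [← neg_inf_neg, ← h, neg_neg]
  · intro h
    rw [leQ, ← neg_neg (inf _ _), neg_inf_neg, h]

lemma neg_leQ_iff_imp_prod_eq {x u : X} : leQ (neg x) u ↔ imp u (prod x u) = x := by
  have sup_neg : sup x (neg u) = imp u (prod x u) := imp_neg_comm _ _
  rw [← sup_neg, ← neg_leQ_neg_iff, neg_neg]

end Involutive

/-- Implicative-orthomodular algebras: involutive BE algebras with `y ≤_Q x → y`. This weakening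
of the quantum-Wajsberg axiom is what makes `imp` compatible with `≤_Q`. -/
class IsImplicativeOrthomodular (X : Type*) [InvBE X] : Prop where
  leQ_imp : ∀ x y : X, leQ y (imp x y)

section ImplicativeOrthomodular

open IsImplicativeOrthomodular (leQ_imp)

variable {X : Type*} [InvBE X] [IsImplicativeOrthomodular X]

lemma neg_leQ_imp (x y : X) : leQ (neg x) (imp x y) := by
  rw [← neg_imp_neg]
  exact leQ_imp (neg y) (neg x)

lemma imp_imp_inf (x y : X) : imp (imp y x) (inf x y) = y := by
  rw [inf_eq_prod_imp]
  exact neg_leQ_iff_imp_prod_eq.1 (neg_leQ_imp y x)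

lemma sup_eq_left_of_leQ {x y : X} (h : leQ x y) : sup y x = y := by
  have cancel := imp_imp_inf x y
  rwa [← h] at cancel

lemma neg_leQ_neg {x y : X} (h : leQ x y) : leQ (neg y) (neg x) :=
  neg_leQ_neg_iff.2 (sup_eq_left_of_leQ h)

lemma imp_leQ_imp_left {x y : X} (h : leQ x y) (z : X) : leQ (imp z x) (imp z y) := by
  have key : imp (imp y x) (imp z x) = imp z y := by
    rw [be4, show imp (imp y x) x = y from sup_eq_left_of_leQ h]
  exact key ▸ leQ_imp (imp y x) (imp z x)

lemma imp_leQ_imp_right {x y : X} (h : leQ x y) (z : X) : leQ (imp y z) (imp x z) := by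
  rw [← neg_imp_neg z y, ← neg_imp_neg z x]
  exact imp_leQ_imp_left (neg_leQ_neg h) (neg z)

lemma inf_leQ_right (x y : X) : leQ (inf x y) y := by
  have h := neg_leQ_neg (leQ_imp (imp (neg x) (neg y)) (neg y))
  rwa [neg_neg] at h

lemma inf_inf_of_leQ {x y : X} (h : leQ x y) (z : X) : inf x (inf y z) = inf x z := by
  rw [inf_inf_eq_prod_inf_imp, ← imp_leQ_imp_left h z, ← inf_eq_prod_imp]

lemma leQ_trans {x y z : X} (hxy : leQ x y) (hyz : leQ y z) : leQ x z :=
  calc x = inf x y := hxy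
    _ = inf x (inf y z) := congrArg (inf x) hyz
    _ = inf x z := inf_inf_of_leQ hxy z

lemma sup_leQ_neg_imp (x y : X) : leQ (sup x y) (imp (neg x) y) :=
  imp_leQ_imp_right (neg_leQ_imp x y) y

lemma imp_inf_left (x y : X) : imp x (inf y x) = imp x y := by
  have h : leQ (neg (imp x y)) x := by
    simpa only [neg_neg] using neg_leQ_neg (neg_leQ_imp x y)
  rw [inf_eq_prod_imp, prod_comm]
  exact neg_leQ_iff_imp_prod_eq.1 h

lemma inf_imp_inf (x y z : X) : imp (inf z x) (inf y x) = imp (inf z x) y := by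
  rw [inf_imp, imp_inf_left, ← inf_imp]

end ImplicativeOrthomodular

/-- Quantum-Wajsberg algebras, as a mixin on involutive BE algebras carrying the axiom (QW). -/
class IsQuantumWajsberg (X : Type*) [InvBE X] : Prop where
  imp_inf_inf : ∀ x y z : X, imp x (inf (inf x y) (inf z x)) = inf (imp x y) (imp x z)

section QuantumWajsberg

open IsQuantumWajsberg (imp_inf_inf)

variable {X : Type*} [InvBE X] [IsQuantumWajsberg X]

instance : IsImplicativeOrthomodular X where
  leQ_imp x y := by
    have h : leQ (neg (neg y)) (imp (neg y) (neg x)) := by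
      have hqw := imp_inf_inf (neg y) zero (neg x)
      rw [inf_zero, zero_inf] at hqw
      exact hqw
    rwa [neg_neg, neg_imp_neg] at h

lemma imp_inf_right (x y : X) : imp x (inf x y) = imp x y := by
  calc imp x (inf x y) = imp x (inf (inf x y) (inf one x)) := by rw [one_inf, imp_inf_left]
    _ = inf (imp x y) (imp x one) := imp_inf_inf x y one
    _ = imp x y := by rw [be2, inf_one]

lemma imp_imp_imp_swap (x y : X) : imp (imp y x) (imp x y) = imp x y := by
  calc imp (imp y x) (imp x y) = imp (imp y x) (imp x (inf x y)) := by rw [imp_inf_right]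
    _ = imp x (imp (imp y x) (inf x y)) := be4 _ _ _
    _ = imp x y := by rw [imp_imp_inf]

lemma neg_imp_neg_imp_swap (x y : X) : imp (neg (imp x y)) (neg (imp y x)) = imp x y := by
  rw [neg_imp_neg, imp_imp_imp_swap]

lemma sup_imp_imp_swap (x y : X) : sup (imp x y) (imp y x) = one := by
  rw [sup, imp_imp_imp_swap, be1]

end QuantumWajsberg

end InvBE

open InvBE in
theorem stmt_7 {X : Type*} [InvBE X]
    (qw : ∀ x y z : X, imp x (inf (inf x y) (inf z x)) = inf (imp x y) (imp x z)) :
    (∀ x y z : X, inf (inf x y) (inf y z) = inf (inf x y) z) ∧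
    (∀ x y z : X, leQ x y → leQ y z → leQ x z) ∧
    (∀ x y : X, leQ (sup x y) (imp (neg x) y)) ∧
    (∀ x y : X, imp (neg (imp (neg x) y)) (neg (imp x (neg y))) = imp (neg x) y) ∧
    (∀ x y : X, imp (neg (imp x y)) (neg (imp y x)) = imp x y) ∧
    (∀ x y : X, imp (imp y x) (imp x y) = imp x y) ∧
    (∀ x y : X, sup (imp x y) (imp y x) = one) ∧
    (∀ x y z : X, imp (inf z x) (inf y x) = imp (inf z x) y) := by
  have : IsQuantumWajsberg X := ⟨qw⟩
  refine ⟨fun x y z ↦ inf_inf_of_leQ (inf_leQ_right x y) z, fun _ _ _ ↦ leQ_trans,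
    sup_leQ_neg_imp, fun x y ↦ ?_, neg_imp_neg_imp_swap, imp_imp_imp_swap, sup_imp_imp_swap,
    inf_imp_inf⟩
  rw [imp_neg_comm x y]
  exact neg_imp_neg_imp_swap (neg x) y
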